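/- arXiv:math/0511458 — 2 statements merged into one kernel-verified Lean document; each statement's English description precedes it below -/
import Mathlib

section
/- If g : ℝ⁷ → ℝ⁷ is a linear automorphism satisfying φ(g x, g y, g z) = φ(x, y, z) for all x, y, z ∈ ℝ⁷, then g preserves the Euclidean inner product, i.e. ⟨g x, g y⟩ = ⟨x, y⟩ for all x, y, and det g = 1. (The linear stabilizer G₂ of φ is contained in SO(7).) -/
noncomputable section

open scoped InnerProductSpace

/-- `3 × 3` determinant of coordinates `a, b, c` of `(x, y, z)`. -/
def det3 (a b c : Fin 7) (x y z : EuclideanSpace ℝ (Fin 7)) : ℝ :=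
  x a * (y b * z c - y c * z b) - x b * (y a * z c - y c * z a) +
    x c * (y a * z b - y b * z a)

/-- The associative calibration `φ` of Harvey–Lawson on `ℝ⁷`. -/
def phi (x y z : EuclideanSpace ℝ (Fin 7)) : ℝ :=
  det3 4 5 6 x y z - det3 4 0 1 x y z - det3 4 2 3 x y z -
    det3 5 0 2 x y z - det3 5 3 1 x y z - det3 6 0 3 x y z - det3 6 1 2 x y z

open Matrix in
/-- The skew matrix of the 2-form `ι_x φ`. -/
def skewA (x : Fin 7 → ℝ) : Matrix (Fin 7) (Fin 7) ℝ :=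
  !![0, -x 4, -x 5, -x 6, x 1, x 2, x 3;
     x 4, 0, -x 6, x 5, -x 0, -x 3, x 2;
     x 5, x 6, 0, -x 4, x 3, -x 0, -x 1;
     x 6, -x 5, x 4, 0, -x 2, x 1, -x 0;
     -x 1, x 0, -x 3, x 2, 0, x 6, -x 5;
     -x 2, x 3, x 0, -x 1, -x 6, 0, x 4;
     -x 3, -x 2, x 1, x 0, x 5, -x 4, 0]

open Matrix

lemma phi_eq (x y z : EuclideanSpace ℝ (Fin 7)) :
    phi x y z = (y.ofLp) ⬝ᵥ (skewA x.ofLp *ᵥ z.ofLp) := by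
  simp [phi, det3, skewA, dotProduct, mulVec, Fin.sum_univ_seven]
  ring

lemma skewA_transpose (x : Fin 7 → ℝ) : (skewA x)ᵀ = - skewA x := by
  ext i j
  fin_cases i <;> fin_cases j <;> simp [skewA]

lemma skewA_sq_mulVec (x y : Fin 7 → ℝ) :
    skewA x *ᵥ (skewA x *ᵥ y) = - (x ⬝ᵥ x) • y + (x ⬝ᵥ y) • x := by
  ext i
  fin_cases i <;>
    simp [skewA, dotProduct, mulVec, Fin.sum_univ_seven] <;> ring

lemma skewA_mulVec_self (x : Fin 7 → ℝ) : skewA x *ᵥ x = 0 := by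
  ext i
  fin_cases i <;>
    simp [skewA, dotProduct, mulVec, Fin.sum_univ_seven] <;> ring

lemma self_vecMul_skewA (x : Fin 7 → ℝ) : x ᵥ* skewA x = 0 := by
  rw [← mulVec_transpose, skewA_transpose, neg_mulVec, skewA_mulVec_self, neg_zero]

lemma skewA_sq (x : Fin 7 → ℝ) :
    skewA x * skewA x = - (x ⬝ᵥ x) • (1 : Matrix (Fin 7) (Fin 7) ℝ) + vecMulVec x x := by
  apply Matrix.ext_of_mulVec_single
  intro i
  rw [← mulVec_mulVec, skewA_sq_mulVec, add_mulVec, smul_mulVec, one_mulVec, vecMulVec_mulVec]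
  simp

lemma det_one_add_vecMulVec' (u v : Fin 7 → ℝ) :
    (1 + vecMulVec u v : Matrix (Fin 7) (Fin 7) ℝ).det = 1 + v ⬝ᵥ u := by
  rw [vecMulVec_eq Unit, det_one_add_replicateCol_mul_replicateRow]

lemma det_D_sq (x : Fin 7 → ℝ) (hx : x ⬝ᵥ x ≠ 0) :
    (skewA x + vecMulVec x x).det ^ 2 = (x ⬝ᵥ x) ^ 8 := by
  have h1 : (skewA x + vecMulVec x x) * (skewA x + vecMulVec x x)ᵀ
      = (x ⬝ᵥ x) • (1 + vecMulVec (((x ⬝ᵥ x - 1) / (x ⬝ᵥ x)) • x) x) := by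
    rw [transpose_add, skewA_transpose, transpose_vecMulVec]
    rw [add_mul, mul_add, mul_add, mul_neg, mul_neg, skewA_sq, mul_vecMulVec, vecMulVec_mul,
      skewA_mulVec_self, self_vecMul_skewA, vecMulVec_mul_vecMulVec, smul_add, smul_vecMulVec,
      smul_smul, mul_div_cancel₀ _ hx]
    simp [sub_smul, vecMulVec_smul]
    abel
  have h2 := congrArg Matrix.det h1
  rw [det_mul, det_transpose, det_smul, det_one_add_vecMulVec', dotProduct_smul] at h2
  rw [sq, h2]
  simp
  field_simp
  ring

lemma norm_scale (G : Matrix (Fin 7) (Fin 7) ℝ)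
    (hG : ∀ x, Gᵀ * skewA (G *ᵥ x) * G = skewA x) (hd : G.det ≠ 0) (x : Fin 7 → ℝ) :
    x ⬝ᵥ x = |G.det| * ((G *ᵥ x) ⬝ᵥ (G *ᵥ x)) := by
  by_cases hx0 : x = 0
  · simp [hx0]
  have hx : x ⬝ᵥ x ≠ 0 := by simpa using hx0
  have hy0 : G *ᵥ x ≠ 0 := fun h => hx0 (Matrix.eq_zero_of_mulVec_eq_zero hd h)
  set y := G *ᵥ x with hy
  have hyy : y ⬝ᵥ y ≠ 0 := by simpa using hy0
  set b := Gᵀ *ᵥ y with hb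
  have hbx : b ⬝ᵥ x = y ⬝ᵥ y := by
    rw [hb, mulVec_transpose, ← dotProduct_mulVec]
  set p : Fin 7 → ℝ := (x ⬝ᵥ x)⁻¹ • (b - x) with hp
  set P : Matrix (Fin 7) (Fin 7) ℝ := 1 + vecMulVec x p with hP
  have hAP : skewA x * P = skewA x := by
    rw [hP, mul_add, mul_vecMulVec, skewA_mulVec_self]; simp
  have hPA : Pᵀ * skewA x = skewA x := by
    rw [hP, transpose_add, transpose_vecMulVec, add_mul, vecMulVec_mul, self_vecMul_skewA]; simp
  have hPx : Pᵀ *ᵥ x = b := by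
    rw [hP, transpose_add, transpose_vecMulVec, add_mulVec, vecMulVec_mulVec, hp]
    simp [smul_smul, hx]
  have e1 : Pᵀ * (skewA x + vecMulVec x x) * P = skewA x + vecMulVec b b := by
    rw [mul_add Pᵀ, add_mul _ _ P, hPA, hAP, mul_vecMulVec, vecMulVec_mul, ← mulVec_transpose, hPx]
  have e2 : Gᵀ * (skewA y + vecMulVec y y) * G = skewA x + vecMulVec b b := by
    rw [mul_add Gᵀ, add_mul _ _ G, hG, mul_vecMulVec, vecMulVec_mul, ← mulVec_transpose]
  have e3 := congrArg Matrix.det (e1.trans e2.symm)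
  rw [det_mul, det_mul, det_mul, det_mul, det_transpose, det_transpose] at e3
  have hdP : P.det * (x ⬝ᵥ x) = y ⬝ᵥ y := by
    rw [hP, det_one_add_vecMulVec', hp, smul_dotProduct, sub_dotProduct, hbx, smul_eq_mul]
    field_simp
    ring
  have d1 := det_D_sq x hx
  have d2 := det_D_sq y hyy
  set n := x ⬝ᵥ x
  set m := y ⬝ᵥ y
  have hn : 0 ≤ n := by
    simpa using dotProduct_star_self_nonneg x
  have hm : 0 ≤ m := by
    simpa using dotProduct_star_self_nonneg y
  have e4 : P.det ^ 4 * n ^ 8 = G.det ^ 4 * m ^ 8 := by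
    rw [← d1, ← d2]
    linear_combination (P.det * (skewA x + vecMulVec x x).det * P.det +
      G.det * (skewA y + vecMulVec y y).det * G.det) * e3
  have e5 : n ^ 4 = (|G.det| * m) ^ 4 := by
    have : m ^ 4 * n ^ 4 = m ^ 4 * (|G.det| * m) ^ 4 := by
      have : |G.det| ^ 4 = G.det ^ 4 := Even.pow_abs (by decide) _
      rw [mul_pow, this, ← hdP]
      rw [← hdP] at e4
      linear_combination e4
    exact mul_left_cancel₀ (pow_ne_zero _ hyy) this
  exact (pow_left_inj₀ hn (by positivity) (by norm_num)).1 e5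

lemma orth (G : Matrix (Fin 7) (Fin 7) ℝ)
    (hG : ∀ x, Gᵀ * skewA (G *ᵥ x) * G = skewA x) (hd : G.det ≠ 0) : Gᵀ * G = 1 := by
  have key := norm_scale G hG hd
  have pol : ∀ x y, x ⬝ᵥ y = |G.det| * ((G *ᵥ x) ⬝ᵥ (G *ᵥ y)) := by
    intro x y
    have h := key (x + y)
    rw [mulVec_add] at h
    simp only [add_dotProduct, dotProduct_add] at h
    rw [dotProduct_comm y x, dotProduct_comm (G *ᵥ y) (G *ᵥ x)] at h
    linarith [key x, key y]
  have h1 : |G.det| • (Gᵀ * G) = 1 := by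
    ext i j
    have := pol (Pi.single i 1) (Pi.single j 1)
    simp only [mulVec_single_one] at this
    rw [Matrix.smul_apply, Matrix.mul_apply, smul_eq_mul]
    simp only [dotProduct, Matrix.col_apply] at this
    simp only [Matrix.transpose_apply]
    rw [← this]
    simp [Matrix.one_apply, Pi.single_apply, eq_comm]
  have h2 := congrArg Matrix.det h1
  rw [det_smul, det_mul, det_transpose, det_one, ← abs_mul_abs_self G.det] at h2
  have h3 : |G.det| = 1 := by
    have : |G.det| ^ 9 = 1 := by rw [← h2, Fintype.card_fin]; ring
    exact (pow_eq_one_iff_of_nonneg (abs_nonneg _) (by norm_num)).1 this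
  rwa [h3, one_smul] at h1

/-- Vectors of the octonions, as `ℝ × ℝ⁷`. -/
abbrev Oct := ℝ × (Fin 7 → ℝ)

lemma skewA_add (x y : Fin 7 → ℝ) : skewA (x + y) = skewA x + skewA y := by
  ext i j
  fin_cases i <;> fin_cases j <;> simp [skewA] <;> ring

lemma skewA_smul (c : ℝ) (x : Fin 7 → ℝ) : skewA (c • x) = c • skewA x := by
  ext i j
  fin_cases i <;> fin_cases j <;> simp [skewA]

/-- Clifford multiplication by `x` on the octonions. -/
def cl : (Fin 7 → ℝ) →ₗ[ℝ] Module.End ℝ Oct :=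
  LinearMap.mk₂ ℝ (fun x w => ((-(x ⬝ᵥ w.2), w.1 • x + skewA x *ᵥ w.2) : Oct))
    (by
      intro x y w
      ext1
      · simp [add_dotProduct]; ring
      · simp only [skewA_add, add_mulVec, smul_add, Prod.snd_add]; abel)
    (by
      intro c x w
      ext1
      · simp
      · simp only [skewA_smul, smul_mulVec, smul_add, Prod.smul_snd, smul_comm c])
    (by
      intro x w v
      ext1
      · simp [dotProduct_add]; ring
      · simp only [mulVec_add, Prod.snd_add, Prod.fst_add, add_smul]; abel)
    (by
      intro c x w
      ext1
      · simp
      · simp [mulVec_smul, smul_smul])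

lemma cl_apply (x : Fin 7 → ℝ) (w : Oct) :
    cl x w = (-(x ⬝ᵥ w.2), w.1 • x + skewA x *ᵥ w.2) := rfl

lemma cl_sq (x : Fin 7 → ℝ) : cl x * cl x = -(x ⬝ᵥ x) • (1 : Module.End ℝ Oct) := by
  apply LinearMap.ext
  intro w
  rw [Module.End.mul_apply, cl_apply, cl_apply]
  ext1
  · have h : x ⬝ᵥ (skewA x *ᵥ w.2) = 0 := by
      rw [dotProduct_mulVec, self_vecMul_skewA, zero_dotProduct]
    simp [dotProduct_add, h]; ring
  · simp only [mulVec_add, mulVec_smul, skewA_mulVec_self, skewA_sq_mulVec]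
    simp

lemma cl_anticomm (x y : Fin 7 → ℝ) (h : x ⬝ᵥ y = 0) : cl x * cl y = -(cl y * cl x) := by
  have h1 := cl_sq (x + y)
  rw [map_add, add_mul, mul_add, mul_add, cl_sq, cl_sq] at h1
  simp only [add_dotProduct, dotProduct_add, h, dotProduct_comm y x] at h1
  have h2 : cl x * cl y + cl y * cl x = 0 := by
    have := sub_eq_zero.2 h1
    rw [← this]
    module
  exact eq_neg_of_add_eq_zero_left h2

/-- The product of seven Clifford multiplications. -/
def prodCl : MultilinearMap ℝ (fun _ : Fin 7 => Fin 7 → ℝ) (Module.End ℝ Oct) :=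
  (MultilinearMap.mkPiAlgebraFin ℝ 7 (Module.End ℝ Oct)).compLinearMap (fun _ => cl)

lemma prodCl_apply (v : Fin 7 → Fin 7 → ℝ) :
    prodCl v = cl (v 0) * (cl (v 1) * (cl (v 2) * (cl (v 3) * (cl (v 4) *
      (cl (v 5) * cl (v 6)))))) := by
  simp [prodCl, MultilinearMap.mkPiAlgebraFin_apply, List.ofFn_succ]

/-- Scalar part of a product applied to `1`. -/
def scal : Module.End ℝ Oct →ₗ[ℝ] ℝ :=
  (LinearMap.fst ℝ ℝ (Fin 7 → ℝ)).comp (LinearMap.applyₗ ((1, 0) : Oct))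

lemma scal_apply (T : Module.End ℝ Oct) : scal T = (T (1, 0)).1 := rfl

lemma anti_left {R : Type*} [Ring R] {a b : R} (h : a * b = -(b * a)) (c : R) :
    a * (b * c) = -(b * (a * c)) := by
  rw [← mul_assoc, h, neg_mul, mul_assoc]

lemma end_mul_neg (a b : Module.End ℝ Oct) : a * -b = -(a * b) := mul_neg a b

lemma prodCl_swap (v : Fin 7 → Fin 7 → ℝ) (hv : ∀ i j, i ≠ j → v i ⬝ᵥ v j = 0) (i : Fin 6) :
    prodCl (v ∘ Equiv.swap i.castSucc i.succ) = - prodCl v := by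
  have hc : ∀ i j, i ≠ j → cl (v i) * cl (v j) = -(cl (v j) * cl (v i)) :=
    fun i j h => cl_anticomm _ _ (hv i j h)
  have key : ∀ (a b : Fin 7), (∀ k, Equiv.swap i.castSucc i.succ k = Equiv.swap a b k) →
      prodCl (v ∘ Equiv.swap a b) = - prodCl v →
      prodCl (v ∘ Equiv.swap i.castSucc i.succ) = - prodCl v := by
    intro a b h h'
    rw [← h', Equiv.ext h]
  fin_cases i
  · apply key 0 1 (by decide)
    simp only [prodCl_apply, Function.comp,
      show Equiv.swap (0 : Fin 7) 1 0 = 1 by decide, show Equiv.swap (0 : Fin 7) 1 1 = 0 by decide,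
      show Equiv.swap (0 : Fin 7) 1 2 = 2 by decide, show Equiv.swap (0 : Fin 7) 1 3 = 3 by decide,
      show Equiv.swap (0 : Fin 7) 1 4 = 4 by decide, show Equiv.swap (0 : Fin 7) 1 5 = 5 by decide,
      show Equiv.swap (0 : Fin 7) 1 6 = 6 by decide]
    rw [anti_left (hc 1 0 (by decide))]
  · apply key 1 2 (by decide)
    simp only [prodCl_apply, Function.comp,
      show Equiv.swap (1 : Fin 7) 2 0 = 0 by decide, show Equiv.swap (1 : Fin 7) 2 1 = 2 by decide,
      show Equiv.swap (1 : Fin 7) 2 2 = 1 by decide, show Equiv.swap (1 : Fin 7) 2 3 = 3 by decide,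
      show Equiv.swap (1 : Fin 7) 2 4 = 4 by decide, show Equiv.swap (1 : Fin 7) 2 5 = 5 by decide,
      show Equiv.swap (1 : Fin 7) 2 6 = 6 by decide]
    rw [anti_left (hc 2 1 (by decide))]
    simp only [end_mul_neg]
  · apply key 2 3 (by decide)
    simp only [prodCl_apply, Function.comp,
      show Equiv.swap (2 : Fin 7) 3 0 = 0 by decide, show Equiv.swap (2 : Fin 7) 3 1 = 1 by decide,
      show Equiv.swap (2 : Fin 7) 3 2 = 3 by decide, show Equiv.swap (2 : Fin 7) 3 3 = 2 by decide,
      show Equiv.swap (2 : Fin 7) 3 4 = 4 by decide, show Equiv.swap (2 : Fin 7) 3 5 = 5 by decide,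
      show Equiv.swap (2 : Fin 7) 3 6 = 6 by decide]
    rw [anti_left (hc 3 2 (by decide))]
    simp only [end_mul_neg]
  · apply key 3 4 (by decide)
    simp only [prodCl_apply, Function.comp,
      show Equiv.swap (3 : Fin 7) 4 0 = 0 by decide, show Equiv.swap (3 : Fin 7) 4 1 = 1 by decide,
      show Equiv.swap (3 : Fin 7) 4 2 = 2 by decide, show Equiv.swap (3 : Fin 7) 4 3 = 4 by decide,
      show Equiv.swap (3 : Fin 7) 4 4 = 3 by decide, show Equiv.swap (3 : Fin 7) 4 5 = 5 by decide,
      show Equiv.swap (3 : Fin 7) 4 6 = 6 by decide]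
    rw [anti_left (hc 4 3 (by decide))]
    simp only [end_mul_neg]
  · apply key 4 5 (by decide)
    simp only [prodCl_apply, Function.comp,
      show Equiv.swap (4 : Fin 7) 5 0 = 0 by decide, show Equiv.swap (4 : Fin 7) 5 1 = 1 by decide,
      show Equiv.swap (4 : Fin 7) 5 2 = 2 by decide, show Equiv.swap (4 : Fin 7) 5 3 = 3 by decide,
      show Equiv.swap (4 : Fin 7) 5 4 = 5 by decide, show Equiv.swap (4 : Fin 7) 5 5 = 4 by decide,
      show Equiv.swap (4 : Fin 7) 5 6 = 6 by decide]
    rw [anti_left (hc 5 4 (by decide))]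
    simp only [end_mul_neg]
  · apply key 5 6 (by decide)
    simp only [prodCl_apply, Function.comp,
      show Equiv.swap (5 : Fin 7) 6 0 = 0 by decide, show Equiv.swap (5 : Fin 7) 6 1 = 1 by decide,
      show Equiv.swap (5 : Fin 7) 6 2 = 2 by decide, show Equiv.swap (5 : Fin 7) 6 3 = 3 by decide,
      show Equiv.swap (5 : Fin 7) 6 4 = 4 by decide, show Equiv.swap (5 : Fin 7) 6 5 = 6 by decide,
      show Equiv.swap (5 : Fin 7) 6 6 = 5 by decide]
    rw [hc 6 5 (by decide)]
    simp only [end_mul_neg]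

lemma prodCl_perm (σ : Equiv.Perm (Fin 7)) (v : Fin 7 → Fin 7 → ℝ)
    (hv : ∀ i j, i ≠ j → v i ⬝ᵥ v j = 0) :
    prodCl (v ∘ σ) = Equiv.Perm.sign σ • prodCl v := by
  have hσ : σ ∈ Submonoid.closure
      (Set.range fun i : Fin 6 ↦ Equiv.swap i.castSucc i.succ) := by
    rw [Equiv.Perm.mclosure_swap_castSucc_succ]; trivial
  induction hσ using Submonoid.closure_induction generalizing v with
  | mem τ h =>
    obtain ⟨i, rfl⟩ := h
    simp only
    rw [prodCl_swap v hv, Equiv.Perm.sign_swap i.castSucc_lt_succ.ne]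
    simp
  | one => simp
  | mul a b _ _ ha hb =>
    rw [Equiv.Perm.coe_mul, ← Function.comp_assoc,
      hb (v ∘ a) (fun i j h => hv _ _ (a.injective.ne h)), ha v hv, map_mul, smul_smul, mul_comm]

/-- An invariant volume form. -/
def vol7 : (Fin 7 → ℝ) [⋀^Fin 7]→ₗ[ℝ] ℝ :=
  MultilinearMap.alternatization (scal.compMultilinearMap prodCl)

lemma scal_prodCl_basis : scal (prodCl (Pi.basisFun ℝ (Fin 7))) ≠ 0 := by
  rw [prodCl_apply, scal_apply]
  simp only [Module.End.mul_apply, cl_apply, Pi.basisFun_apply, mulVec_zero, dotProduct_zero,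
    one_smul, mulVec_single_one, neg_zero, add_zero]
  simp [skewA, dotProduct, Fin.sum_univ_seven, Pi.single_apply]

lemma vol7_basis : vol7 (Pi.basisFun ℝ (Fin 7)) ≠ 0 := by
  have h : ∀ σ : Equiv.Perm (Fin 7), Equiv.Perm.sign σ •
      (scal.compMultilinearMap prodCl).domDomCongr σ (Pi.basisFun ℝ (Fin 7))
        = scal (prodCl (Pi.basisFun ℝ (Fin 7))) := by
    intro σ
    rw [MultilinearMap.domDomCongr_apply, LinearMap.compMultilinearMap_apply]
    have := prodCl_perm σ (Pi.basisFun ℝ (Fin 7)) (by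
      intro i j hij
      simp [hij])
    rw [Function.comp_def] at this
    rw [this]
    rcases Int.units_eq_one_or (Equiv.Perm.sign σ) with h | h <;> simp [h]
  rw [vol7, MultilinearMap.alternatization_apply, Finset.sum_congr rfl (fun σ _ => h σ)]
  simp [Fintype.card_perm, scal_prodCl_basis, Nat.factorial_ne_zero]

lemma scal_prodCl_inv (G : Matrix (Fin 7) (Fin 7) ℝ)
    (hG : ∀ x, skewA (G *ᵥ x) * G = G * skewA x) (hO : Gᵀ * G = 1) (v : Fin 7 → Fin 7 → ℝ) :
    scal (prodCl (fun i => G *ᵥ v i)) = scal (prodCl v) := by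
  have step : ∀ (x : Fin 7 → ℝ) (w : Oct),
      cl (G *ᵥ x) (w.1, G *ᵥ w.2) = ((cl x w).1, G *ᵥ (cl x w).2) := by
    intro x w
    rw [cl_apply, cl_apply]
    ext1
    · simp only
      rw [dotProduct_mulVec, ← mulVec_transpose, mulVec_mulVec, hO, one_mulVec]
    · simp only [mulVec_add, mulVec_smul, mulVec_mulVec, hG]
  have hz : ((1, 0) : Oct) = (((1, 0) : Oct).1, G *ᵥ ((1, 0) : Oct).2) := by simp
  rw [prodCl_apply, prodCl_apply, scal_apply, scal_apply]
  simp only [Module.End.mul_apply]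
  conv_lhs => rw [hz]
  rw [step, step, step, step, step, step, step]

lemma det_eq_one (G : Matrix (Fin 7) (Fin 7) ℝ)
    (hG : ∀ x, skewA (G *ᵥ x) * G = G * skewA x) (hO : Gᵀ * G = 1) : G.det = 1 := by
  have h1 : vol7 (fun i => G *ᵥ (Pi.basisFun ℝ (Fin 7) i)) = vol7 (Pi.basisFun ℝ (Fin 7)) := by
    rw [vol7, MultilinearMap.alternatization_apply, MultilinearMap.alternatization_apply]
    refine Finset.sum_congr rfl fun σ _ => ?_
    rw [MultilinearMap.domDomCongr_apply, MultilinearMap.domDomCongr_apply,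
      LinearMap.compMultilinearMap_apply, LinearMap.compMultilinearMap_apply,
      scal_prodCl_inv G hG hO]
  have h2 : vol7 (fun i => G *ᵥ (Pi.basisFun ℝ (Fin 7) i))
      = vol7 (Pi.basisFun ℝ (Fin 7)) * G.det := by
    conv_lhs => rw [AlternatingMap.eq_smul_basis_det (Pi.basisFun ℝ (Fin 7)) vol7]
    have := Module.Basis.det_comp (Pi.basisFun ℝ (Fin 7)) (Matrix.toLin' G)
      (Pi.basisFun ℝ (Fin 7))
    rw [LinearMap.det_toLin', Module.Basis.det_self, mul_one] at this
    have hf : (fun i => G *ᵥ (Pi.basisFun ℝ (Fin 7) i))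
        = (Matrix.toLin' G) ∘ (Pi.basisFun ℝ (Fin 7)) := by
      funext i
      rw [Function.comp_apply, Matrix.toLin'_apply]
    rw [AlternatingMap.smul_apply, smul_eq_mul, hf, this]
  rw [h2] at h1
  exact mul_left_cancel₀ vol7_basis (by rw [h1, mul_one])

/-- A linear automorphism of `ℝ⁷` preserving `φ` preserves the Euclidean inner
product and has determinant `1`: the stabilizer `G₂` of `φ` lies in `SO(7)`. -/
theorem phi_stabilizer_mem_SO7
    (g : EuclideanSpace ℝ (Fin 7) ≃ₗ[ℝ] EuclideanSpace ℝ (Fin 7))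
    (hg : ∀ x y z, phi (g x) (g y) (g z) = phi x y z) :
    (∀ x y, ⟪g x, g y⟫_ℝ = ⟪x, y⟫_ℝ) ∧
      LinearMap.det (g : EuclideanSpace ℝ (Fin 7) →ₗ[ℝ] EuclideanSpace ℝ (Fin 7)) = 1 := by
  set b := (EuclideanSpace.basisFun (Fin 7) ℝ).toBasis with hb
  set G := LinearMap.toMatrix b b
    (g : EuclideanSpace ℝ (Fin 7) →ₗ[ℝ] EuclideanSpace ℝ (Fin 7)) with hGdef
  have hrep : ∀ x : EuclideanSpace ℝ (Fin 7), (b.repr x : Fin 7 → ℝ) = x.ofLp := by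
    intro x; ext i; simp [hb]
  have hGx : ∀ x, (g x).ofLp = G *ᵥ x.ofLp := by
    intro x
    have := LinearMap.toMatrix_mulVec_repr b b
      (g : EuclideanSpace ℝ (Fin 7) →ₗ[ℝ] EuclideanSpace ℝ (Fin 7)) x
    rw [hrep, hrep] at this
    exact this.symm
  have hdet : G.det = LinearMap.det
      (g : EuclideanSpace ℝ (Fin 7) →ₗ[ℝ] EuclideanSpace ℝ (Fin 7)) := by
    rw [hGdef, LinearMap.det_toMatrix]
  have hd : G.det ≠ 0 := by
    rw [hdet]; exact (LinearEquiv.isUnit_det' g).ne_zero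
  have hG : ∀ x, Gᵀ * skewA (G *ᵥ x) * G = skewA x := by
    intro x
    ext i j
    have := hg (WithLp.toLp 2 x) (WithLp.toLp 2 (Pi.single i 1)) (WithLp.toLp 2 (Pi.single j 1))
    rw [phi_eq, phi_eq, hGx, hGx, hGx] at this
    simp only [mulVec_mulVec] at this
    rw [← vecMul_transpose, ← dotProduct_mulVec, mulVec_mulVec] at this
    simpa [Matrix.mul_assoc] using this
  have hO := orth G hG hd
  have hO' : G * Gᵀ = 1 := mul_eq_one_comm.1 hO
  refine ⟨fun x y => ?_, ?_⟩
  · rw [EuclideanSpace.inner_eq_star_dotProduct, EuclideanSpace.inner_eq_star_dotProduct,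
      hGx, hGx, star_trivial, star_trivial, dotProduct_mulVec, ← mulVec_transpose, mulVec_mulVec,
      hO, one_mulVec]
  · rw [← hdet]
    refine det_eq_one G (fun x => ?_) hO
    rw [← hG x, ← Matrix.mul_assoc, ← Matrix.mul_assoc, hO', Matrix.one_mul]
end
end

section
/- Let V and W be 4-dimensional linear subspaces of ℝ⁷ on each of which φ vanishes identically (i.e. φ(x, y, z) = 0 whenever x, y, z all lie in V, and likewise for W). Then there exists a linear isometry g of ℝ⁷ satisfying φ(g x, g y, g z) = φ(x, y, z) for all x, y, z ∈ ℝ⁷ and g(V) = W. (G₂ acts transitively on the Grassmannian of coassociative 4-planes; hence coassociative 4-folds have no first-order invariants.) -/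
noncomputable section

open scoped InnerProductSpace

abbrev E7 := EuclideanSpace ℝ (Fin 7)

/-- The cross product associated with `phi`. -/
def cr (x y : E7) : E7 :=
  !₂[-(x 1 * y 4 - x 4 * y 1) - (x 2 * y 5 - x 5 * y 2) - (x 3 * y 6 - x 6 * y 3),
     -(x 4 * y 0 - x 0 * y 4) - (x 5 * y 3 - x 3 * y 5) - (x 2 * y 6 - x 6 * y 2),
     -(x 3 * y 4 - x 4 * y 3) - (x 5 * y 0 - x 0 * y 5) - (x 6 * y 1 - x 1 * y 6),
     -(x 4 * y 2 - x 2 * y 4) - (x 1 * y 5 - x 5 * y 1) - (x 6 * y 0 - x 0 * y 6),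
     (x 5 * y 6 - x 6 * y 5) - (x 0 * y 1 - x 1 * y 0) - (x 2 * y 3 - x 3 * y 2),
     (x 6 * y 4 - x 4 * y 6) - (x 0 * y 2 - x 2 * y 0) - (x 3 * y 1 - x 1 * y 3),
     (x 4 * y 5 - x 5 * y 4) - (x 0 * y 3 - x 3 * y 0) - (x 1 * y 2 - x 2 * y 1)]

theorem in7 (x y : E7) : ⟪x, y⟫_ℝ = x 0 * y 0 + x 1 * y 1 + x 2 * y 2 + x 3 * y 3 + x 4 * y 4
    + x 5 * y 5 + x 6 * y 6 := by
  simp [PiLp.inner_apply, Fin.sum_univ_seven]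
  ring

theorem cr0 (x y : E7) : cr x y 0 =
  -(x 1 * y 4 - x 4 * y 1) - (x 2 * y 5 - x 5 * y 2) - (x 3 * y 6 - x 6 * y 3) := rfl
theorem cr1 (x y : E7) : cr x y 1 =
  -(x 4 * y 0 - x 0 * y 4) - (x 5 * y 3 - x 3 * y 5) - (x 2 * y 6 - x 6 * y 2) := rfl
theorem cr2 (x y : E7) : cr x y 2 =
  -(x 3 * y 4 - x 4 * y 3) - (x 5 * y 0 - x 0 * y 5) - (x 6 * y 1 - x 1 * y 6) := rfl
theorem cr3 (x y : E7) : cr x y 3 =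
  -(x 4 * y 2 - x 2 * y 4) - (x 1 * y 5 - x 5 * y 1) - (x 6 * y 0 - x 0 * y 6) := rfl
theorem cr4 (x y : E7) : cr x y 4 =
  (x 5 * y 6 - x 6 * y 5) - (x 0 * y 1 - x 1 * y 0) - (x 2 * y 3 - x 3 * y 2) := rfl
theorem cr5 (x y : E7) : cr x y 5 =
  (x 6 * y 4 - x 4 * y 6) - (x 0 * y 2 - x 2 * y 0) - (x 3 * y 1 - x 1 * y 3) := rfl
theorem cr6 (x y : E7) : cr x y 6 =
  (x 4 * y 5 - x 5 * y 4) - (x 0 * y 3 - x 3 * y 0) - (x 1 * y 2 - x 2 * y 1) := rfl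

theorem ext7 {x y : E7} (h0 : x 0 = y 0) (h1 : x 1 = y 1) (h2 : x 2 = y 2) (h3 : x 3 = y 3)
    (h4 : x 4 = y 4) (h5 : x 5 = y 5) (h6 : x 6 = y 6) : x = y := by
  ext i; fin_cases i <;> assumption

theorem phi_eq_s16 (x y z : E7) : phi x y z = ⟪cr x y, z⟫_ℝ := by
  simp only [in7, cr0, cr1, cr2, cr3, cr4, cr5, cr6, phi, det3]; ring

theorem cr_anti (x y : E7) : cr x y = - cr y x := by
  apply ext7 <;> simp only [cr0, cr1, cr2, cr3, cr4, cr5, cr6, PiLp.neg_apply] <;> ring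

theorem cr_self (x : E7) : cr x x = 0 := by
  apply ext7 <;> simp only [cr0, cr1, cr2, cr3, cr4, cr5, cr6, PiLp.zero_apply] <;> ring

theorem cr_add_left (x y z : E7) : cr (x + y) z = cr x z + cr y z := by
  apply ext7 <;> simp only [cr0, cr1, cr2, cr3, cr4, cr5, cr6, PiLp.add_apply] <;> ring

theorem cr_add_right (x y z : E7) : cr x (y + z) = cr x y + cr x z := by
  apply ext7 <;> simp only [cr0, cr1, cr2, cr3, cr4, cr5, cr6, PiLp.add_apply] <;> ring

theorem cr_smul_left (t : ℝ) (x y : E7) : cr (t • x) y = t • cr x y := by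
  apply ext7 <;>
    simp only [cr0, cr1, cr2, cr3, cr4, cr5, cr6, PiLp.smul_apply, smul_eq_mul] <;> ring

theorem cr_smul_right (t : ℝ) (x y : E7) : cr x (t • y) = t • cr x y := by
  apply ext7 <;>
    simp only [cr0, cr1, cr2, cr3, cr4, cr5, cr6, PiLp.smul_apply, smul_eq_mul] <;> ring

theorem cr_neg_left (x y : E7) : cr (-x) y = - cr x y := by
  apply ext7 <;> simp only [cr0, cr1, cr2, cr3, cr4, cr5, cr6, PiLp.neg_apply] <;> ring

theorem cr_neg_right (x y : E7) : cr x (-y) = - cr x y := by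
  apply ext7 <;> simp only [cr0, cr1, cr2, cr3, cr4, cr5, cr6, PiLp.neg_apply] <;> ring

theorem cr_cr (x y z : E7) : cr x (cr y z) = -cr y (cr x z) + ⟪x, z⟫_ℝ • y + ⟪y, z⟫_ℝ • x
    - (2 * ⟪x, y⟫_ℝ) • z := by
  apply ext7 <;> simp only [in7, cr0, cr1, cr2, cr3, cr4, cr5, cr6, PiLp.neg_apply,
    PiLp.add_apply, PiLp.sub_apply, PiLp.smul_apply, smul_eq_mul] <;> ring

theorem cr_T {x y z : E7} (h1 : ⟪x, y⟫_ℝ = 0) (h2 : ⟪x, z⟫_ℝ = 0) (h3 : ⟪y, z⟫_ℝ = 0) :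
    cr x (cr y z) = -cr y (cr x z) := by
  rw [cr_cr, h1, h2, h3]; simp

theorem cr_S {x y : E7} (h1 : ⟪x, y⟫_ℝ = 0) (h2 : ⟪x, x⟫_ℝ = 1) : cr x (cr x y) = -y := by
  have h : cr x (cr x y) = ⟪x, y⟫_ℝ • x - ⟪x, x⟫_ℝ • y := by
    apply ext7 <;> simp only [in7, cr0, cr1, cr2, cr3, cr4, cr5, cr6,
      PiLp.sub_apply, PiLp.smul_apply, smul_eq_mul] <;> ring
  rw [h, h1, h2]; simp

theorem in_cyc (x y z : E7) : ⟪cr x y, z⟫_ℝ = ⟪x, cr y z⟫_ℝ := by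
  simp only [in7, cr0, cr1, cr2, cr3, cr4, cr5, cr6]; ring

theorem in_cr_left (x y : E7) : ⟪x, cr x y⟫_ℝ = 0 := by
  simp only [in7, cr0, cr1, cr2, cr3, cr4, cr5, cr6]; ring

theorem in_cr_right (x y : E7) : ⟪x, cr y x⟫_ℝ = 0 := by
  simp only [in7, cr0, cr1, cr2, cr3, cr4, cr5, cr6]; ring

theorem in_cr_cr (x y z : E7) :
    ⟪cr x y, cr x z⟫_ℝ = ⟪x, x⟫_ℝ * ⟪y, z⟫_ℝ - ⟪x, y⟫_ℝ * ⟪x, z⟫_ℝ := by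
  simp only [in7, cr0, cr1, cr2, cr3, cr4, cr5, cr6]; ring

theorem key (a b c : E7) (haa : ⟪a, a⟫_ℝ = 1) (hbb : ⟪b, b⟫_ℝ = 1) (hcc : ⟪c, c⟫_ℝ = 1)
    (hab : ⟪a, b⟫_ℝ = 0) (hac : ⟪a, c⟫_ℝ = 0) (hbc : ⟪b, c⟫_ℝ = 0) (h : phi a b c = 0) :
    ∃ g : E7 ≃ₗᵢ[ℝ] E7, (∀ x y z, phi (g x) (g y) (g z) = phi x y z) ∧
      g (EuclideanSpace.single 0 1) = a ∧ g (EuclideanSpace.single 1 1) = b ∧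
      g (EuclideanSpace.single 2 1) = c := by
  rw [phi_eq_s16] at h
  have hba : ⟪b, a⟫_ℝ = 0 := by rw [real_inner_comm]; exact hab
  have hca : ⟪c, a⟫_ℝ = 0 := by rw [real_inner_comm]; exact hac
  have hcb : ⟪c, b⟫_ℝ = 0 := by rw [real_inner_comm]; exact hbc
  obtain ⟨P, hP⟩ : ∃ P, cr a b = P := ⟨_, rfl⟩
  obtain ⟨Q, hQ⟩ : ∃ Q, cr a c = Q := ⟨_, rfl⟩
  obtain ⟨R, hR⟩ : ∃ R, cr b c = R := ⟨_, rfl⟩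
  obtain ⟨d, hd⟩ : ∃ d, cr P c = d := ⟨_, rfl⟩
  have hP' : cr b a = -P := by rw [cr_anti, hP]
  have hQ' : cr c a = -Q := by rw [cr_anti, hQ]
  have hR' : cr c b = -R := by rw [cr_anti, hR]
  have hd' : cr c P = -d := by rw [cr_anti, hd]
  -- orthogonality of a, b, c with P, Q, R
  have aP : ⟪a, P⟫_ℝ = 0 := by rw [← hP]; exact in_cr_left _ _
  have bP : ⟪b, P⟫_ℝ = 0 := by rw [← hP]; exact in_cr_right _ _
  have cP : ⟪c, P⟫_ℝ = 0 := by rw [← hP, real_inner_comm]; exact h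
  have aQ : ⟪a, Q⟫_ℝ = 0 := by rw [← hQ]; exact in_cr_left _ _
  have cQ : ⟪c, Q⟫_ℝ = 0 := by rw [← hQ]; exact in_cr_right _ _
  have bQ : ⟪b, Q⟫_ℝ = 0 := by
    rw [← hQ, ← in_cyc, hP', inner_neg_left, real_inner_comm, cP, neg_zero]
  have bR : ⟪b, R⟫_ℝ = 0 := by rw [← hR]; exact in_cr_left _ _
  have cR : ⟪c, R⟫_ℝ = 0 := by rw [← hR]; exact in_cr_right _ _
  have aR : ⟪a, R⟫_ℝ = 0 := by rw [← hR, ← in_cyc]; exact h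
  have PP : ⟪P, P⟫_ℝ = 1 := by rw [← hP, in_cr_cr, haa, hbb, hab]; norm_num
  have QQ : ⟪Q, Q⟫_ℝ = 1 := by rw [← hQ, in_cr_cr, haa, hcc, hac]; norm_num
  have RR : ⟪R, R⟫_ℝ = 1 := by rw [← hR, in_cr_cr, hbb, hcc, hbc]; norm_num
  have PQ : ⟪P, Q⟫_ℝ = 0 := by rw [← hQ, ← hP, in_cr_cr, hbc, hab]; norm_num
  have PR : ⟪P, R⟫_ℝ = 0 := by
    have := in_cr_cr b a c
    rw [hP', hR, hac, hba, inner_neg_left] at this; linarith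
  have QR : ⟪Q, R⟫_ℝ = 0 := by
    have := in_cr_cr c a b
    rw [hQ', hR', hab, hca, inner_neg_neg] at this; linarith
  have Pa : ⟪P, a⟫_ℝ = 0 := by rw [real_inner_comm]; exact aP
  have Pb : ⟪P, b⟫_ℝ = 0 := by rw [real_inner_comm]; exact bP
  have Pc : ⟪P, c⟫_ℝ = 0 := by rw [real_inner_comm]; exact cP
  have Qa : ⟪Q, a⟫_ℝ = 0 := by rw [real_inner_comm]; exact aQ
  have Qb : ⟪Q, b⟫_ℝ = 0 := by rw [real_inner_comm]; exact bQ
  have Qc : ⟪Q, c⟫_ℝ = 0 := by rw [real_inner_comm]; exact cQ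
  have Ra : ⟪R, a⟫_ℝ = 0 := by rw [real_inner_comm]; exact aR
  have Rb : ⟪R, b⟫_ℝ = 0 := by rw [real_inner_comm]; exact bR
  have Rc : ⟪R, c⟫_ℝ = 0 := by rw [real_inner_comm]; exact cR
  have QP : ⟪Q, P⟫_ℝ = 0 := by rw [real_inner_comm]; exact PQ
  have RP : ⟪R, P⟫_ℝ = 0 := by rw [real_inner_comm]; exact PR
  have RQ : ⟪R, Q⟫_ℝ = 0 := by rw [real_inner_comm]; exact QR
  -- multiplication table
  have taP : cr a P = -b := by rw [← hP]; exact cr_S hab haa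
  have tbP : cr b P = a := by
    have := cr_S hba hbb
    rw [hP', cr_neg_right] at this; exact neg_injective this
  have taQ : cr a Q = -c := by rw [← hQ]; exact cr_S hac haa
  have tcQ : cr c Q = a := by
    have := cr_S hca hcc
    rw [hQ', cr_neg_right] at this; exact neg_injective this
  have tbR : cr b R = -c := by rw [← hR]; exact cr_S hbc hbb
  have tcR : cr c R = b := by
    have := cr_S hcb hcc
    rw [hR', cr_neg_right] at this; exact neg_injective this
  have taR : cr a R = -d := by
    have := cr_T hac hab hcb
    rw [hR', cr_neg_right, hP, hd'] at this; exact neg_injective this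
  have tbQ : cr b Q = d := by
    have := cr_T hba hbc hac
    rw [hQ, hR, taR, neg_neg] at this; exact this
  have tad : cr a d = R := by
    have := cr_T hac aP cP
    rw [hd', taP, cr_neg_right, cr_neg_right, hR', neg_neg] at this; exact neg_injective this
  have tbd : cr b d = -Q := by
    have := cr_T hbc bP cP
    rw [hd', tbP, cr_neg_right, hQ', neg_neg] at this; rw [← this, neg_neg]
  have tcd : cr c d = P := by
    have := cr_S cP hcc
    rw [hd', cr_neg_right] at this; exact neg_injective this
  have tPd : cr P d = -c := by rw [← hd]; exact cr_S Pc PP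
  have tQb : cr Q b = -d := by rw [cr_anti, tbQ]
  have tRa : cr R a = d := by rw [cr_anti, taR, neg_neg]
  have tQd : cr Q d = b := by
    have := cr_S Qb QQ
    rw [tQb, cr_neg_right] at this; exact neg_injective this
  have tRd : cr R d = -a := by rw [← tRa]; exact cr_S Ra RR
  have tPQ : cr P Q = -R := by
    have := cr_T Pa Pc hac
    rw [hQ, hd, tad] at this; exact this
  have tQc : cr Q c = -a := by rw [cr_anti, tcQ]
  have tQR : cr Q R = -P := by
    have := cr_T Qb Qc hbc
    rw [hR, tQc, cr_neg_right, hP', neg_neg] at this; exact this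
  have tRb : cr R b = c := by rw [cr_anti, tbR, neg_neg]
  have tRP : cr R P = -Q := by
    have := cr_T Ra Rb hab
    rw [hP, tRb, hQ] at this; exact this
  have tPa : cr P a = b := by rw [cr_anti, taP, neg_neg]
  have tPb : cr P b = -a := by rw [cr_anti, tbP]
  have tQa : cr Q a = c := by rw [cr_anti, taQ, neg_neg]
  have tRc : cr R c = -b := by rw [cr_anti, tcR]
  have tda : cr d a = -R := by rw [cr_anti, tad]
  have tdb : cr d b = Q := by rw [cr_anti, tbd, neg_neg]
  have tdc : cr d c = -P := by rw [cr_anti, tcd]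
  have tdP : cr d P = c := by rw [cr_anti, tPd, neg_neg]
  have tdQ : cr d Q = -b := by rw [cr_anti, tQd]
  have tdR : cr d R = a := by rw [cr_anti, tRd, neg_neg]
  have tQP : cr Q P = R := by rw [cr_anti, tPQ, neg_neg]
  have tRQ : cr R Q = P := by rw [cr_anti, tQR, neg_neg]
  have tPR : cr P R = Q := by rw [cr_anti, tRP, neg_neg]
  -- orthogonality with d
  have ad : ⟪a, d⟫_ℝ = 0 := by rw [← tbQ, ← in_cyc, hP, PQ]
  have bd : ⟪b, d⟫_ℝ = 0 := by rw [← tbQ]; exact in_cr_left _ _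
  have cd : ⟪c, d⟫_ℝ = 0 := by rw [← hd]; exact in_cr_right _ _
  have Pd : ⟪P, d⟫_ℝ = 0 := by rw [← hd]; exact in_cr_left _ _
  have Qd : ⟪Q, d⟫_ℝ = 0 := by rw [← tbQ]; exact in_cr_right _ _
  have Rd : ⟪R, d⟫_ℝ = 0 := by rw [← tRa]; exact in_cr_left _ _
  have dd : ⟪d, d⟫_ℝ = 1 := by rw [← hd, in_cr_cr, PP, hcc, Pc]; norm_num
  have da : ⟪d, a⟫_ℝ = 0 := by rw [real_inner_comm]; exact ad
  have db : ⟪d, b⟫_ℝ = 0 := by rw [real_inner_comm]; exact bd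
  have dc : ⟪d, c⟫_ℝ = 0 := by rw [real_inner_comm]; exact cd
  have dP : ⟪d, P⟫_ℝ = 0 := by rw [real_inner_comm]; exact Pd
  have dQ : ⟪d, Q⟫_ℝ = 0 := by rw [real_inner_comm]; exact Qd
  have dR : ⟪d, R⟫_ℝ = 0 := by rw [real_inner_comm]; exact Rd
  let f : Fin 7 → E7 := ![a, b, c, d, -P, -Q, -R]
  have hf : Orthonormal ℝ f := by
    rw [orthonormal_iff_ite]
    intro i j
    fin_cases i <;> fin_cases j <;> simp [f, -inner_self_eq_norm_sq_to_K, *]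
  let B₀ := basisOfOrthonormalOfCardEqFinrank hf (by simp)
  have hB₀ : ⇑B₀ = f := coe_basisOfOrthonormalOfCardEqFinrank hf (by simp)
  let B : OrthonormalBasis (Fin 7) ℝ E7 := B₀.toOrthonormalBasis (by rw [hB₀]; exact hf)
  have hB : ⇑B = f := by simp [B, hB₀]
  let g := B.repr.symm
  have hg : ∀ x : E7, g x = x 0 • a + x 1 • b + x 2 • c + x 3 • d + x 4 • (-P) + x 5 • (-Q)
      + x 6 • (-R) := by
    intro x
    have := B.sum_repr_symm x
    rw [← this, hB, Fin.sum_univ_seven]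
    rfl
  have hcr : ∀ x y, cr (g x) (g y) = g (cr x y) := by
    intro x y
    rw [hg x, hg y, hg (cr x y)]
    simp only [cr_add_left, cr_add_right, cr_smul_left, cr_smul_right, cr_neg_left, cr_neg_right,
      cr_self, hP, hQ, hR, hd, hP', hQ', hR', hd', taP, tbP, taQ, tcQ, tbR, tcR, taR, tbQ, tad,
      tbd, tcd, tPd, tQb, tRa, tQd, tRd, tPQ, tQc, tQR, tRb, tRP, tPa, tPb, tQa, tRc, tda, tdb,
      tdc, tdP, tdQ, tdR, tQP, tRQ, tPR, cr0, cr1, cr2, cr3, cr4, cr5, cr6]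
    module
  refine ⟨g, ?_, ?_, ?_, ?_⟩
  · intro x y z
    rw [phi_eq_s16, phi_eq_s16, hcr, g.inner_map_map]
  · rw [hg]; simp
  · rw [hg]; simp
  · rw [hg]; simp

/-- The model coassociative plane. -/
def V0 : Submodule ℝ E7 where
  carrier := {x | x 4 = 0 ∧ x 5 = 0 ∧ x 6 = 0}
  add_mem' := by
    rintro x y ⟨h1, h2, h3⟩ ⟨k1, k2, k3⟩
    simp [*]
  zero_mem' := by simp
  smul_mem' := by
    rintro t x ⟨h1, h2, h3⟩
    simp [*]

theorem finrank_V0 : Module.finrank ℝ V0 ≤ 4 := by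
  let T : V0 →ₗ[ℝ] (Fin 4 → ℝ) :=
    { toFun := fun x => ![x.1 0, x.1 1, x.1 2, x.1 3]
      map_add' := by intro x y; ext i; fin_cases i <;> simp
      map_smul' := by intro t x; ext i; fin_cases i <;> simp }
  have hT : Function.Injective T := by
    rintro ⟨x, hx4, hx5, hx6⟩ ⟨y, hy4, hy5, hy6⟩ hxy
    have e0 : x 0 = y 0 := congrFun hxy 0
    have e1 : x 1 = y 1 := congrFun hxy 1
    have e2 : x 2 = y 2 := congrFun hxy 2
    have e3 : x 3 = y 3 := congrFun hxy 3
    apply Subtype.ext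
    exact ext7 e0 e1 e2 e3 (hx4.trans hy4.symm) (hx5.trans hy5.symm) (hx6.trans hy6.symm)
  simpa using LinearMap.finrank_le_finrank_of_injective hT

theorem toModel (V : Submodule ℝ E7) (hV : Module.finrank ℝ V = 4)
    (hVphi : ∀ x ∈ V, ∀ y ∈ V, ∀ z ∈ V, phi x y z = 0) :
    ∃ g : E7 ≃ₗᵢ[ℝ] E7, (∀ x y z, phi (g x) (g y) (g z) = phi x y z) ∧
      ∀ x, g x ∈ V ↔ x ∈ V0 := by
  let b := (stdOrthonormalBasis ℝ V).reindex (finCongr hV)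
  have hb : ∀ i j, ⟪(b i : E7), (b j : E7)⟫_ℝ = if i = j then 1 else 0 := by
    intro i j
    exact orthonormal_iff_ite.1 b.orthonormal i j
  obtain ⟨g, hg, h0, h1, h2⟩ := key (b 0) (b 1) (b 2) (by rw [hb]; simp) (by rw [hb]; simp)
    (by rw [hb]; simp) (by rw [hb]; simp) (by rw [hb]; simp) (by rw [hb]; simp)
    (hVphi _ (b 0).2 _ (b 1).2 _ (b 2).2)
  have hle : V.map (g.symm.toLinearEquiv : E7 →ₗ[ℝ] E7) ≤ V0 := by
    rintro _ ⟨w, hw, rfl⟩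
    have hw' : g (g.symm w) = w := g.apply_symm_apply w
    change g.symm w ∈ V0
    generalize g.symm w = x at hw'
    subst hw'
    have k1 := hVphi _ (b 0).2 _ (b 1).2 _ hw
    have k2 := hVphi _ (b 0).2 _ (b 2).2 _ hw
    have k3 := hVphi _ (b 1).2 _ (b 2).2 _ hw
    rw [← h0, ← h1, hg] at k1
    rw [← h0, ← h2, hg] at k2
    rw [← h1, ← h2, hg] at k3
    simp [phi, det3] at k1 k2 k3
    exact ⟨k1, k2, k3⟩
  have heq := Submodule.eq_of_le_of_finrank_le hle (by
    rw [LinearEquiv.finrank_map_eq, hV]; exact finrank_V0)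
  refine ⟨g, hg, fun x => ?_⟩
  rw [← heq]
  constructor
  · intro hx
    exact ⟨g x, hx, g.symm_apply_apply x⟩
  · rintro ⟨w, hw, hwx⟩
    have : g.symm w = x := hwx
    rw [← this, g.apply_symm_apply]; exact hw

/-- `G₂` acts transitively on the Grassmannian of coassociative 4-planes:
given 4-dimensional subspaces `V, W ⊆ ℝ⁷` on each of which `φ` vanishes
identically, some linear isometry of `ℝ⁷` preserving `φ` carries `V` onto
`W`.  (Hence coassociative 4-folds have no first-order invariants.) -/
theorem G2_transitive_on_coassociative_planes
    (V W : Submodule ℝ (EuclideanSpace ℝ (Fin 7)))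
    (hV : Module.finrank ℝ V = 4) (hW : Module.finrank ℝ W = 4)
    (hVphi : ∀ x ∈ V, ∀ y ∈ V, ∀ z ∈ V, phi x y z = 0)
    (hWphi : ∀ x ∈ W, ∀ y ∈ W, ∀ z ∈ W, phi x y z = 0) :
    ∃ g : EuclideanSpace ℝ (Fin 7) ≃ₗᵢ[ℝ] EuclideanSpace ℝ (Fin 7),
      (∀ x y z, phi (g x) (g y) (g z) = phi x y z) ∧
      (fun x => g x) '' (V : Set (EuclideanSpace ℝ (Fin 7))) = W := by
  obtain ⟨g, hg, hgV⟩ := toModel V hV hVphi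
  obtain ⟨k, hk, hkW⟩ := toModel W hW hWphi
  refine ⟨g.symm.trans k, ?_, ?_⟩
  · intro x y z
    simp only [LinearIsometryEquiv.trans_apply]
    rw [hk, ← hg, g.apply_symm_apply, g.apply_symm_apply, g.apply_symm_apply]
  · ext w
    simp only [LinearIsometryEquiv.trans_apply, Set.mem_image, SetLike.mem_coe]
    constructor
    · rintro ⟨x, hx, rfl⟩
      rw [hkW, ← hgV, g.apply_symm_apply]; exact hx
    · intro hw
      refine ⟨g (k.symm w), ?_, by simp⟩
      rw [hgV, ← hkW, k.apply_symm_apply]; exact hw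
end
end
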